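/- Let R be a commutative ℚ-algebra, c ∈ R a unit, M an R-module, and N : M → M a nilpotent R-linear endomorphism. Let M[Y] := R[Y] ⊗_R M (polynomials in Y with coefficients in M), and let D : M[Y] → M[Y] be the R-linear map determined by D(Yᵏ ⊗ m) = Yᵏ ⊗ N(m) + c·k·Y^{k−1} ⊗ m for all k ≥ 0 and m ∈ M. Then the R-linear map ε : M → M[Y], ε(m) = Σ_{k≥0} ((−1/c)ᵏ/k!)·Yᵏ ⊗ Nᵏ(m) (a finite sum since N is nilpotent), is injective with image exactly ker D; in particular ker D ≅ M as R-modules, so if M is free of rank d over R then ker D is free of rank d. Moreover, the R[Y]-linear endomorphism of M[Y] determined by 1 ⊗ m ↦ ε(m) is bijective. -/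

import Mathlib

/-- The map `ε : M → M[Y]`, `m ↦ Σ_k ((−1/c)ᵏ/k!) · Yᵏ ⊗ Nᵏ(m)` (a finite sum, truncated at the
nilpotency index `n` of `N`). -/
noncomputable def stmtEps (R : Type*) [CommRing R] [Algebra ℚ R] {M : Type*}
    [AddCommGroup M] [Module R M] (c : Rˣ) (N : M →ₗ[R] M) (n : ℕ) (m : M) :
    PolynomialModule R M :=
  ∑ k ∈ Finset.range n,
    PolynomialModule.single R k
      ((algebraMap ℚ R ((-1) ^ k / (Nat.factorial k)) * ((c⁻¹ : Rˣ) : R) ^ k) • ((N ^ k) m))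

/-!
Put `A = -N / c`, so that `D = c (d/dY - A)` on coefficients and `ε m = exp (Y A) m`. Comparing
coefficients, `D x = 0` says `(k + 1) xₖ₊₁ = A xₖ` for all `k`. As the positive integers are
invertible, this holds if and only if `xₖ = Aᵏ x₀ / k!`, that is `x = ε x₀`. The `R[Y]`-linear
extension of `ε` is the exponential of the nilpotent endomorphism `Y A` of `M[Y]`, hence a unit.
-/

open scoped Nat Polynomial TensorProduct

section Factorial

variable {R : Type*} [Semiring R] [Algebra ℚ R]

theorem isUnit_natCast_of_ne_zero {k : ℕ} (hk : k ≠ 0) : IsUnit (k : R) := by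
  rw [← map_natCast (algebraMap ℚ R)]
  exact (IsUnit.mk0 _ (Nat.cast_ne_zero.mpr hk)).map _

theorem succ_mul_algebraMap_inv_factorial_succ (k : ℕ) :
    ((k + 1 : ℕ) : R) * algebraMap ℚ R ((k + 1)! : ℚ)⁻¹ = algebraMap ℚ R (k ! : ℚ)⁻¹ := by
  rw [← map_natCast (algebraMap ℚ R), ← map_mul, Nat.factorial_succ, Nat.cast_mul,
    mul_inv, mul_inv_cancel_left₀ (by positivity)]

end Factorial

theorem forall_succ_smul_eq_iff {R M : Type*} [Semiring R] [Algebra ℚ R] [AddCommMonoid M]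
    [Module R M] (A : Module.End R M) (x : ℕ → M) :
    (∀ k, ((k + 1 : ℕ) : R) • x (k + 1) = A (x k)) ↔
      ∀ k, x k = algebraMap ℚ R (k ! : ℚ)⁻¹ • (A ^ k) (x 0) := by
  have succ_smul (k : ℕ) :
      ((k + 1 : ℕ) : R) • algebraMap ℚ R ((k + 1)! : ℚ)⁻¹ • (A ^ (k + 1)) (x 0) =
        A (algebraMap ℚ R (k ! : ℚ)⁻¹ • (A ^ k) (x 0)) := by
    rw [smul_smul, succ_mul_algebraMap_inv_factorial_succ, map_smul, pow_succ',
      Module.End.mul_apply]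
  refine ⟨fun h k ↦ ?_, fun h k ↦ ?_⟩
  · induction k with
    | zero => simp
    | succ k ih =>
      refine (isUnit_natCast_of_ne_zero (R := R) k.succ_ne_zero).smul_left_cancel.mp ?_
      rw [h, succ_smul, ← ih]
  · rw [h (k + 1), h k, succ_smul]

theorem isUnit_sum_inv_factorial_smul_pow {S A : Type*} [Semiring S] [Algebra ℚ S] [Ring A]
    [Module S A] {a : A} {n : ℕ} (ha : a ^ n = 0) :
    IsUnit (∑ k ∈ Finset.range n, algebraMap ℚ S (k ! : ℚ)⁻¹ • a ^ k) := by
  let : Module ℚ A := Module.compHom A (algebraMap ℚ S)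
  have hexp : IsNilpotent.exp a = ∑ k ∈ Finset.range n, algebraMap ℚ S (k ! : ℚ)⁻¹ • a ^ k :=
    IsNilpotent.exp_eq_sum ha
  exact hexp ▸ IsNilpotent.isUnit_exp ⟨n, ha⟩

section PolynomialModule

variable {R M : Type*} [CommRing R] [AddCommGroup M] [Module R M]

theorem polynomialModule_hom_ext {P : Type*} [AddCommMonoid P] [Module R[X] P]
    {f g : PolynomialModule R M →ₗ[R[X]] P}
    (h : ∀ m, f (PolynomialModule.single R 0 m) = g (PolynomialModule.single R 0 m)) : f = g := by
  ext x
  induction x using PolynomialModule.induction_linear with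
  | zero => simp only [map_zero]
  | add x y hx hy => simp only [map_add, hx, hy]
  | single i m =>
    have hm : PolynomialModule.single R i m =
        Polynomial.monomial i (1 : R) • PolynomialModule.single R 0 m := by simp
    rw [hm, map_smul, map_smul, h]

/-- Extension of scalars `A ↦ R[X] ⊗ A` on endomorphisms, with `R[X] ⊗ M` identified with
`PolynomialModule R M`: the endomorphism `A` acts on each coefficient. -/
noncomputable def polynomialModuleEnd : Module.End R M →+* Module.End R[X] (PolynomialModule R M) :=
  (PolynomialModule.polynomialTensorProductLEquivPolynomialModule R M).conjRingEquiv.toRingHom.comp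
    (Module.End.baseChangeHom R R[X] M).toRingHom

theorem polynomialModuleEnd_single_zero (A : Module.End R M) (m : M) :
    polynomialModuleEnd A (PolynomialModule.single R 0 m) = PolynomialModule.single R 0 (A m) := by
  let e := PolynomialModule.polynomialTensorProductLEquivPolynomialModule R M
  have e_tmul (m : M) : e (1 ⊗ₜ m) = PolynomialModule.single R 0 m :=
    one_smul R[X] (PolynomialModule.single R 0 m)
  have conj_apply (x : R[X] ⊗[R] M) : polynomialModuleEnd A (e x) = e (A.baseChange R[X] x) :=
    congrArg (fun y ↦ e (A.baseChange R[X] y)) (e.symm_apply_apply x)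
  rw [← e_tmul, ← e_tmul, conj_apply, LinearMap.baseChange_tmul]

variable {c : R} {N : Module.End R M} {D : PolynomialModule R M →ₗ[R] PolynomialModule R M}

theorem coeff_apply_of_forall_single
    (hD : ∀ (k : ℕ) (m : M), D (PolynomialModule.single R k m) =
      PolynomialModule.single R k (N m) + (c * (k : R)) • PolynomialModule.single R (k - 1) m)
    (x : PolynomialModule R M) (k : ℕ) :
    (D x).coeff k = N (x.coeff k) + (c * ((k + 1 : ℕ) : R)) • x.coeff (k + 1) := by
  induction x using PolynomialModule.induction_linear with
  | zero => simp
  | add x y hx hy =>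
    simp only [map_add, PolynomialModule.coeff_add, Finsupp.add_apply, hx, hy, smul_add]
    abel
  | single i m =>
    rw [hD, ← PolynomialModule.single_smul]
    simp only [PolynomialModule.coeff_add, PolynomialModule.coeff_single, Finsupp.add_apply,
      Finsupp.single_apply]
    obtain _ | i := i
    · simp [apply_ite N]
    · rcases eq_or_ne i k with rfl | hik
      · simp
      · simp [hik, apply_ite N]

end PolynomialModule

section Eps

variable {R M : Type*} [CommRing R] [Algebra ℚ R] [AddCommGroup M] [Module R M]
  (c : Rˣ) {N : M →ₗ[R] M} {n : ℕ}

theorem stmtEps_eq_sum (N : M →ₗ[R] M) (n : ℕ) (m : M) :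
    stmtEps R c N n m = ∑ k ∈ Finset.range n,
      PolynomialModule.single R k (algebraMap ℚ R (k ! : ℚ)⁻¹ • ((-c⁻¹ • N) ^ k) m) := by
  refine Finset.sum_congr rfl fun k _ ↦ ?_
  rw [smul_pow, LinearMap.smul_apply, Units.smul_def, smul_smul, div_eq_mul_inv, map_mul]
  congr 2
  simp only [map_pow, map_neg, map_one, Units.val_pow_eq_pow_val, Units.val_neg]
  rw [neg_pow (c⁻¹ : Rˣ).val]
  ring

theorem coeff_stmtEps (hn : N ^ n = 0) (m : M) (k : ℕ) :
    (stmtEps R c N n m).coeff k = algebraMap ℚ R (k ! : ℚ)⁻¹ • ((-c⁻¹ • N) ^ k) m := by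
  simp only [stmtEps_eq_sum, PolynomialModule.coeff_sum, PolynomialModule.coeff_single,
    Finsupp.finsetSum_apply, Finsupp.single_apply, Finset.sum_ite_eq', Finset.mem_range,
    ite_eq_left_iff, not_lt]
  intro hnk
  rw [smul_pow, pow_eq_zero_of_le hnk hn]
  simp

theorem coeff_zero_stmtEps (hn : N ^ n = 0) (m : M) : (stmtEps R c N n m).coeff 0 = m := by
  simp [coeff_stmtEps c hn]

theorem stmtEps_injective (hn : N ^ n = 0) : Function.Injective (stmtEps R c N n) :=
  Function.LeftInverse.injective (g := fun x : PolynomialModule R M ↦ x.coeff 0)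
    (coeff_zero_stmtEps c hn)

/-- The map `stmtEps` bundled as an `R`-linear map. -/
noncomputable def stmtEpsLinearMap (N : M →ₗ[R] M) (n : ℕ) : M →ₗ[R] PolynomialModule R M where
  toFun := stmtEps R c N n
  map_add' a b := by simp [stmtEps, Finset.sum_add_distrib]
  map_smul' r a := by
    simp only [stmtEps, map_smul, RingHom.id_apply, Finset.smul_sum,
      ← PolynomialModule.single_smul, smul_comm r]

variable {c} {D : PolynomialModule R M →ₗ[R] PolynomialModule R M}

theorem apply_eq_zero_iff_exists_stmtEps_eq (hn : N ^ n = 0)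
    (hD : ∀ (k : ℕ) (m : M), D (PolynomialModule.single R k m) =
      PolynomialModule.single R k (N m) +
        ((c : R) * (k : R)) • PolynomialModule.single R (k - 1) m)
    (x : PolynomialModule R M) : D x = 0 ↔ ∃ m : M, stmtEps R c N n m = x := by
  have coeff_eq_zero_iff (k : ℕ) : (D x).coeff k = 0 ↔
      ((k + 1 : ℕ) : R) • x.coeff (k + 1) = (-c⁻¹ • N) (x.coeff k) := by
    rw [coeff_apply_of_forall_single hD, add_comm, add_eq_zero_iff_eq_neg, mul_smul,
      ← Units.smul_def, ← eq_inv_smul_iff, LinearMap.smul_apply, smul_neg,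
      ← Units.neg_smul]
  calc
    D x = 0 ↔ ∀ k, (D x).coeff k = 0 := by
      rw [← PolynomialModule.coeff_eq_zero, DFunLike.ext_iff]; rfl
    _ ↔ ∀ k, x.coeff k = algebraMap ℚ R (k ! : ℚ)⁻¹ • ((-c⁻¹ • N) ^ k) (x.coeff 0) := by
      simp only [coeff_eq_zero_iff]
      exact forall_succ_smul_eq_iff _ _
    _ ↔ stmtEps R c N n (x.coeff 0) = x := by
      simp only [PolynomialModule.ext_iff, DFunLike.ext_iff, coeff_stmtEps c hn, eq_comm]
    _ ↔ ∃ m : M, stmtEps R c N n m = x := by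
      refine ⟨fun h ↦ ⟨_, h⟩, ?_⟩
      rintro ⟨m, rfl⟩
      rw [coeff_zero_stmtEps c hn]

theorem bijective_of_forall_single_zero_eq_stmtEps (hn : N ^ n = 0)
    (Φ : PolynomialModule R M →ₗ[R[X]] PolynomialModule R M)
    (hΦ : ∀ m, Φ (PolynomialModule.single R 0 m) = stmtEps R c N n m) :
    Function.Bijective Φ := by
  let a : Module.End R[X] (PolynomialModule R M) :=
    (Polynomial.X : R[X]) • polynomialModuleEnd (-c⁻¹ • N)
  have a_pow (k : ℕ) :
      a ^ k = (Polynomial.X ^ k : R[X]) • polynomialModuleEnd ((-c⁻¹ • N) ^ k) := by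
    rw [smul_pow, map_pow]
  have a_pow_n : a ^ n = 0 := by
    rw [a_pow, smul_pow, hn, smul_zero, map_zero, smul_zero]
  have Φ_eq : Φ = ∑ k ∈ Finset.range n, algebraMap ℚ R[X] (k ! : ℚ)⁻¹ • a ^ k := by
    refine polynomialModule_hom_ext fun m ↦ ?_
    rw [hΦ, stmtEps_eq_sum, LinearMap.sum_apply]
    refine Finset.sum_congr rfl fun k _ ↦ ?_
    rw [a_pow, smul_smul, LinearMap.smul_apply, polynomialModuleEnd_single_zero,
      IsScalarTower.algebraMap_apply ℚ R R[X], Polynomial.algebraMap_eq,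
      Polynomial.C_mul_X_pow_eq_monomial, PolynomialModule.monomial_smul_single, add_zero]
  exact (Module.End.isUnit_iff Φ).mp (Φ_eq ▸ isUnit_sum_inv_factorial_smul_pow a_pow_n)

end Eps

/-- Let `R` be a commutative `ℚ`-algebra, `c ∈ R` a unit, `M` an `R`-module and
`N : M → M` a nilpotent `R`-linear endomorphism (`Nⁿ = 0`).  Let `M[Y]` be the module of
polynomials with coefficients in `M` and `D` the `R`-linear map determined by
`D(Yᵏ ⊗ m) = Yᵏ ⊗ N(m) + c·k·Y^{k−1} ⊗ m`.  Then `ε : m ↦ Σ_k ((−1/c)ᵏ/k!)·Yᵏ ⊗ Nᵏ(m)` is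
injective with image exactly `ker D`; in particular `ker D ≅ M`, so if `M` is free of rank `d`
then so is `ker D`.  Moreover the `R[Y]`-linear endomorphism of `M[Y]` determined by
`1 ⊗ m ↦ ε(m)` is bijective. -/
theorem stmt9 (R : Type*) [CommRing R] [Algebra ℚ R]
    (M : Type*) [AddCommGroup M] [Module R M]
    (c : Rˣ) (N : M →ₗ[R] M) (n : ℕ) (hn : N ^ n = 0)
    (D : PolynomialModule R M →ₗ[R] PolynomialModule R M)
    (hD : ∀ (k : ℕ) (m : M),
      D (PolynomialModule.single R k m)
        = PolynomialModule.single R k (N m)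
          + ((c : R) * (k : R)) • PolynomialModule.single R (k - 1) m) :
    Function.Injective (stmtEps R c N n) ∧
    (∀ x : PolynomialModule R M, D x = 0 ↔ ∃ m : M, stmtEps R c N n m = x) ∧
    Nonempty ((LinearMap.ker D) ≃ₗ[R] M) ∧
    (Module.Free R M → ∀ d : ℕ, Module.rank R M = d →
      Module.Free R (LinearMap.ker D) ∧ Module.rank R (LinearMap.ker D) = d) ∧
    (∀ Φ : PolynomialModule R M →ₗ[Polynomial R] PolynomialModule R M,
      (∀ m : M, Φ (PolynomialModule.single R 0 m) = stmtEps R c N n m) →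
      Function.Bijective Φ) := by
  have hker := apply_eq_zero_iff_exists_stmtEps_eq hn hD
  have range_eq_ker : LinearMap.range (stmtEpsLinearMap c N n) = LinearMap.ker D := by
    ext x
    exact (hker x).symm
  let e : M ≃ₗ[R] LinearMap.ker D :=
    (LinearEquiv.ofInjective (stmtEpsLinearMap c N n) (stmtEps_injective c hn)).trans
      (LinearEquiv.ofEq _ _ range_eq_ker)
  exact ⟨stmtEps_injective c hn, hker, ⟨e.symm⟩,
    fun _ d hd ↦ ⟨Module.Free.of_equiv e, e.rank_eq ▸ hd⟩,
    bijective_of_forall_single_zero_eq_stmtEps hn⟩
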